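/- Let γ = (1 + √5)/2 be the golden ratio, and set α = γ^{−3}, β = γ^{−2}. Let x* be the largest real root of the polynomial x³ − 19x² + 31x + 3 (one has 17 < x* < 18). Then the Hausdorff dimension of C_α − (2/γ)·C_β equals log x* / (6·log γ). -/

import Mathlib

/-!
Since `1 - φ⁻³ = 2 φ⁻² = (2 / φ) (1 - φ⁻²)`, the difference set is, up to scaling and a finite union
of translates, a compact set `T` with `φ⁶ T = D + T` for a finite set `D` of golden integers. Hence
`φ⁶ⁿ T` is the union of the translates of `T` by the sums `∑ k < n, φ⁶ᵏ dₖ` with digits `dₖ ∈ D`.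

*Counting.* Multiplying by `φ⁶` and adding `D` turns each of the patterns `{0}`, `{0, 1}` and
`{0, 1, φ, 1 + φ}` into a union of translates of these patterns which are so far apart that their
descendants never meet. So the numbers of descendants obey a linear recursion, with matrix
`[[5, 4, 2], [6, 7, 4], [8, 12, 7]]`. Its characteristic polynomial is `x³ - 19 x² + 31 x + 3`, and
comparison with a positive eigenvector shows that the number of digit sums of length `n` is
comparable to `xⁿ`.

*Separation.* The Galois conjugates of the digit sums are bounded since `|ψ| < 1`, so an interval of
bounded length contains boundedly many digit sums. Covering `T` by `xⁿ` intervals of length `φ⁻⁶ⁿ`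
is therefore optimal up to a constant factor, and the dimension is `log x / log φ⁶`.
-/

open Set MeasureTheory

/-- The middle Cantor set `C_a`, for `0 < a < 1/2`:
`C_a = { (1-a) * ∑ εₖ aᵏ : εₖ ∈ {0,1} }`. -/
noncomputable def middleCantor (a : ℝ) : Set ℝ :=
  {x : ℝ | ∃ ε : ℕ → Bool, x = (1 - a) * ∑' k : ℕ, (if ε k then a ^ k else 0)}

/-- The arithmetic difference `C_a - l · C_b`. -/
noncomputable def diffSet (a b l : ℝ) : Set ℝ :=
  {z : ℝ | ∃ x ∈ middleCantor a, ∃ y ∈ middleCantor b, z = x - l * y}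

open Filter Metric Topology
open scoped Finset ENNReal NNReal Pointwise goldenRatio

section Hausdorff

variable {X : Type*} [MetricSpace X]

lemma exists_radius_rpow_lt {d ε : ℝ≥0∞} {s : ℝ} (hs : 0 ≤ s) (hd : d < 1) (hε : 0 < ε) :
    ∃ r : ℝ, d < ENNReal.ofReal r ∧ r ≤ 1 ∧ ENNReal.ofReal (r ^ s) < d ^ s + ε := by
  have hds : d ^ s < d ^ s + ε :=
    ENNReal.lt_add_right (ENNReal.rpow_ne_top_of_nonneg hs hd.ne_top) hε.ne'
  have hev : ∀ᶠ e in 𝓝[>] d, e ^ s < d ^ s + ε :=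
    ((ENNReal.continuous_rpow_const.tendsto d).mono_left nhdsWithin_le_nhds).eventually_lt_const hds
  have : (𝓝[>] d).NeBot := nhdsGT_neBot_of_exists_gt ⟨1, hd⟩
  obtain ⟨e, hes, hde, he1⟩ := (hev.and (Ioo_mem_nhdsGT hd)).exists
  lift e to ℝ≥0 using he1.ne_top
  refine ⟨e, by simpa using hde, by exact_mod_cast he1.le, ?_⟩
  rwa [← ENNReal.ofReal_rpow_of_nonneg e.coe_nonneg hs, ENNReal.ofReal_coe_nnreal]

/-- Enlarging the pieces of a countable cover to open balls makes it possible to pass to a finite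
subcover. -/
theorem le_hausdorffMeasure_of_finite_cover [Nonempty X] [MeasurableSpace X] [BorelSpace X]
    {K : Set X} (hK : IsCompact K) {s : ℝ} (hs : 0 < s) {c : ℝ≥0∞}
    (hcover : ∀ (F : Finset ℕ) (y : ℕ → X) (r : ℕ → ℝ), (∀ i, 0 < r i ∧ r i ≤ 1) →
      K ⊆ ⋃ i ∈ F, ball (y i) (r i) → c ≤ ∑ i ∈ F, ENNReal.ofReal (r i ^ s)) :
    c ≤ μH[s] K := by
  rw [Measure.hausdorffMeasure_apply]
  refine le_iSup₂_of_le (2⁻¹ : ℝ≥0∞) (by simp) ?_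
  refine le_iInf fun t => le_iInf fun hKt => le_iInf fun hdiam => ?_
  have hterm (i) : ⨆ _ : (t i).Nonempty, ediam (t i) ^ s = ediam (t i) ^ s := by
    rcases (t i).eq_empty_or_nonempty with h | h <;> simp [h, hs]
  simp only [hterm]
  refine ENNReal.le_of_forall_pos_le_add fun ε hε _ => ?_
  obtain ⟨ε', hε', hsum⟩ := ENNReal.exists_pos_sum_of_countable
    (ε := (ε : ℝ≥0∞)) (by exact_mod_cast hε.ne') ℕ
  have hball (i) : ∃ (y : X) (r : ℝ), 0 < r ∧ r ≤ 1 ∧ t i ⊆ ball y r ∧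
      ENNReal.ofReal (r ^ s) ≤ ediam (t i) ^ s + ε' i := by
    obtain ⟨r, hdr, hr1, hrs⟩ := exists_radius_rpow_lt hs.le
      ((hdiam i).trans_lt (by simp)) (ENNReal.coe_pos.2 (hε' i))
    have hr0 : 0 < r := ENNReal.ofReal_pos.1 (bot_le.trans_lt hdr)
    rcases (t i).eq_empty_or_nonempty with hempty | ⟨y, hy⟩
    · exact ⟨Classical.arbitrary X, r, hr0, hr1, by simp [hempty], hrs.le⟩
    · refine ⟨y, r, hr0, hr1, fun z hz => ?_, hrs.le⟩
      rw [mem_ball, ← edist_lt_ofReal]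
      exact (edist_le_ediam_of_mem hz hy).trans_lt hdr
  choose y r hr0 hr1 hsub hrs using hball
  obtain ⟨F, hF⟩ := hK.elim_finite_subcover (fun i => ball (y i) (r i))
    (fun _ => isOpen_ball) (hKt.trans (iUnion_mono hsub))
  calc c ≤ ∑ i ∈ F, ENNReal.ofReal (r i ^ s) := hcover F y r (fun i => ⟨hr0 i, hr1 i⟩) hF
    _ ≤ ∑ i ∈ F, (ediam (t i) ^ s + ε' i) := Finset.sum_le_sum fun i _ => hrs i
    _ ≤ ∑' i, (ediam (t i) ^ s + ε' i) := ENNReal.sum_le_tsum F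
    _ = ∑' i, ediam (t i) ^ s + ∑' i, (ε' i : ℝ≥0∞) := ENNReal.tsum_add
    _ ≤ ∑' i, ediam (t i) ^ s + ε := by gcongr

variable {ι : Type*} {U : ℕ → Finset ι} {pt : ℕ → ι → X} {ρ s C : ℝ}

lemma card_filter_dist_lt_le_rpow (hρ : 1 < ρ) (hs : 0 ≤ s) (hC : 0 ≤ C)
    (hnear : ∀ (k m : ℕ) (y : X),
      (#{p ∈ U (k + m) | dist (pt (k + m) p) y ≤ (ρ ^ k)⁻¹} : ℝ) ≤ C * (ρ ^ s) ^ m)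
    {n : ℕ} {r : ℝ} (hnr : (ρ ^ n)⁻¹ < r) (hr : r ≤ 1) (y : X) :
    (#{p ∈ U n | dist (pt n p) y < r} : ℝ) ≤ C * ρ ^ s * (ρ ^ s) ^ n * r ^ s := by
  have hρ0 : 0 < ρ := by linarith
  have hr0 : 0 < r := lt_trans (by positivity) hnr
  obtain ⟨k, hk, hk'⟩ := exists_nat_pow_near (x := r⁻¹) (y := ρ) ((one_le_inv₀ hr0).2 hr) hρ
  have hrk : r ≤ (ρ ^ k)⁻¹ := (le_inv_comm₀ (by positivity) hr0).1 hk
  have hkn : k < n := (pow_lt_pow_iff_right₀ hρ).1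
    ((inv_lt_inv₀ (by positivity) (by positivity)).1 (hnr.trans_le hrk))
  obtain ⟨m, rfl⟩ := Nat.exists_eq_add_of_le hkn.le
  have hrs : 1 ≤ (ρ ^ s) ^ (k + 1) * r ^ s := by
    rw [Real.rpow_pow_comm hρ0.le, ← Real.mul_rpow (by positivity) hr0.le]
    exact Real.one_le_rpow ((inv_le_iff_one_le_mul₀ hr0).1 hk'.le) hs
  calc (#{p ∈ U (k + m) | dist (pt (k + m) p) y < r} : ℝ)
      ≤ #{p ∈ U (k + m) | dist (pt (k + m) p) y ≤ (ρ ^ k)⁻¹} := by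
        gcongr with p
        exact fun h => h.le.trans hrk
    _ ≤ C * (ρ ^ s) ^ m := hnear k m y
    _ ≤ C * (ρ ^ s) ^ m * ((ρ ^ s) ^ (k + 1) * r ^ s) := le_mul_of_one_le_right (by positivity) hrs
    _ = C * ρ ^ s * (ρ ^ s) ^ (k + m) * r ^ s := by ring

theorem le_dimH_of_card_near_le [Nonempty X] {K : Set X} (hK : IsCompact K) (hρ : 1 < ρ)
    (hs : 0 < s) {c : ℝ} (hc : 0 < c) (hC : 0 < C) (hcard : ∀ n, c * (ρ ^ s) ^ n ≤ #(U n))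
    (hmem : ∀ n, ∀ p ∈ U n, pt n p ∈ K)
    (hnear : ∀ (k m : ℕ) (y : X),
      (#{p ∈ U (k + m) | dist (pt (k + m) p) y ≤ (ρ ^ k)⁻¹} : ℝ) ≤ C * (ρ ^ s) ^ m) :
    ENNReal.ofReal s ≤ dimH K := by
  classical
  borelize X
  have hρ0 : 0 < ρ := by linarith
  have hpos : 0 < c / (C * ρ ^ s) := by positivity
  refine le_dimH_of_hausdorffMeasure_ne_zero (d := s.toNNReal) ?_
  rw [Real.coe_toNNReal s hs.le]
  refine ((ENNReal.ofReal_pos.2 hpos).trans_le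
    (le_hausdorffMeasure_of_finite_cover hK hs fun F y r hr hKF => ?_)).ne'
  rw [← ENNReal.ofReal_sum_of_nonneg fun i _ => Real.rpow_nonneg (hr i).1.le s]
  refine ENNReal.ofReal_le_ofReal ((div_le_iff₀ (by positivity)).2 ?_)
  obtain ⟨n, hn⟩ : ∃ n : ℕ, ∀ i ∈ F, (ρ ^ n)⁻¹ < r i :=
    ((Finset.eventually_all F).2 fun i _ =>
      ((tendsto_inv_atTop_zero.comp (tendsto_pow_atTop_atTop_of_one_lt hρ)).eventually_lt_const
        (hr i).1)).exists
  have hsub : U n ⊆ F.biUnion fun i => {p ∈ U n | dist (pt n p) (y i) < r i} := fun p hp => by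
    obtain ⟨i, hi, hlt⟩ := mem_iUnion₂.1 (hKF (hmem n p hp))
    exact Finset.mem_biUnion.2 ⟨i, hi, Finset.mem_filter.2 ⟨hp, hlt⟩⟩
  refine le_of_mul_le_mul_right ?_ (pow_pos (Real.rpow_pos_of_pos hρ0 s) n)
  calc c * (ρ ^ s) ^ n ≤ #(U n) := hcard n
    _ ≤ ∑ i ∈ F, (#{p ∈ U n | dist (pt n p) (y i) < r i} : ℝ) := by
        exact_mod_cast (Finset.card_le_card hsub).trans Finset.card_biUnion_le
    _ ≤ ∑ i ∈ F, C * ρ ^ s * (ρ ^ s) ^ n * r i ^ s := Finset.sum_le_sum fun i hi =>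
        card_filter_dist_lt_le_rpow hρ hs.le hC.le hnear (hn i hi) (hr i).2 (y i)
    _ = (∑ i ∈ F, r i ^ s) * (C * ρ ^ s) * (ρ ^ s) ^ n := by rw [← Finset.mul_sum]; ring

theorem dimH_le_of_card_le {K : Set X} (hρ : 1 < ρ) (hs : 0 ≤ s) {R : ℝ} (hR : 0 ≤ R)
    (hcard : ∀ n, #(U n) ≤ C * (ρ ^ s) ^ n)
    (hcover : ∀ n, K ⊆ ⋃ p ∈ U n, closedBall (pt n p) (R * (ρ ^ n)⁻¹)) :
    dimH K ≤ ENNReal.ofReal s := by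
  borelize X
  have hρ0 : 0 < ρ := by linarith
  refine dimH_le_of_hausdorffMeasure_ne_top (d := s.toNNReal) ?_
  rw [Real.coe_toNNReal s hs]
  have hdiam (n : ℕ) (p : ι) :
      ediam (closedBall (pt n p) (R * (ρ ^ n)⁻¹)) ≤ ENNReal.ofReal (2 * R * (ρ ^ n)⁻¹) := by
    rw [← closedEBall_ofReal (by positivity), mul_assoc, ENNReal.ofReal_mul zero_le_two,
      ENNReal.ofReal_ofNat]
    exact ediam_closedEBall_le
  have hlim : Tendsto (fun n : ℕ => ENNReal.ofReal (2 * R * (ρ ^ n)⁻¹)) atTop (𝓝 0) := by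
    simpa using ENNReal.tendsto_ofReal
      ((tendsto_inv_atTop_zero.comp (tendsto_pow_atTop_atTop_of_one_lt hρ)).const_mul (2 * R))
  have hsum (n : ℕ) : ∑ p : U n, ediam (closedBall (pt n p) (R * (ρ ^ n)⁻¹)) ^ s ≤
      ENNReal.ofReal (C * (2 * R) ^ s) := by
    calc ∑ p : U n, ediam (closedBall (pt n p) (R * (ρ ^ n)⁻¹)) ^ s
        ≤ ∑ _p : U n, ENNReal.ofReal ((2 * R * (ρ ^ n)⁻¹) ^ s) := by
          gcongr with p
          rw [← ENNReal.ofReal_rpow_of_nonneg (by positivity) hs]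
          exact ENNReal.rpow_le_rpow (hdiam n p) hs
      _ = ENNReal.ofReal (#(U n) * (2 * R * (ρ ^ n)⁻¹) ^ s) := by
          rw [ENNReal.ofReal_mul (by positivity)]; simp
      _ ≤ ENNReal.ofReal (C * (ρ ^ s) ^ n * (2 * R * (ρ ^ n)⁻¹) ^ s) := by
          gcongr; exact hcard n
      _ = ENNReal.ofReal (C * (2 * R) ^ s) := by
          rw [Real.mul_rpow (by positivity) (by positivity), Real.inv_rpow (by positivity),
            ← Real.rpow_pow_comm hρ0.le]
          congr 1
          field_simp
  have hmeas : μH[s] K ≤ ENNReal.ofReal (C * (2 * R) ^ s) :=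
    (Measure.hausdorffMeasure_le_liminf_sum s K _ hlim
      (fun n (p : U n) => closedBall (pt n p) (R * (ρ ^ n)⁻¹)) (.of_forall fun n p => hdiam n p)
      (.of_forall fun n => (hcover n).trans_eq (biUnion_eq_iUnion _ _))).trans
    ((liminf_le_liminf (.of_forall hsum)).trans_eq (liminf_const _))
  exact ne_top_of_le_ne_top ENNReal.ofReal_ne_top hmeas

end Hausdorff

section DigitSystem

variable {A : Type*} [CommRing A] [DecidableEq A]

/-- The set of the sums `∑ k < n, b ^ k * d k` with digits `d k ∈ D`, the elements of `A` with an
expansion of length `n` in base `b`. -/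
def digitSums (b : A) (D : Finset A) (n : ℕ) : Finset A :=
  ∑ k ∈ Finset.range n, b ^ k • D

/-- The set of the `n`-th generation descendants of `X`: the `n`-fold iterate of the expansion
operator `X ↦ b • X + D`, written in closed form. -/
def descendants (b : A) (D : Finset A) (n : ℕ) (X : Finset A) : Finset A :=
  b ^ n • X + digitSums b D n

variable {b : A} {D : Finset A}

lemma digitSums_add (k m : ℕ) :
    digitSums b D (k + m) = b ^ m • digitSums b D k + digitSums b D m := by
  rw [digitSums, add_comm k m, Finset.sum_range_add, add_comm]
  simp only [digitSums, Finset.smul_sum, smul_smul, pow_add]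

lemma digitSums_zero : digitSums b D 0 = {0} := rfl

lemma digitSums_succ (n : ℕ) : digitSums b D (n + 1) = b • digitSums b D n + D := by
  simpa [digitSums] using digitSums_add (b := b) (D := D) n 1

lemma descendants_zero_singleton (n : ℕ) : descendants b D n {0} = digitSums b D n := by
  rw [descendants, Finset.singleton_zero, smul_zero, zero_add]

lemma descendants_zero (X : Finset A) : descendants b D 0 X = X := by
  rw [descendants, digitSums_zero, Finset.singleton_zero, pow_zero, one_smul, add_zero]

lemma descendants_succ (n : ℕ) (X : Finset A) :
    descendants b D (n + 1) X = descendants b D n (b • X + D) := by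
  rw [descendants, descendants, add_comm n, digitSums_add]
  simp [digitSums, smul_smul, pow_add, add_assoc, mul_comm]

lemma mem_descendants {n : ℕ} {X : Finset A} {a : A} :
    a ∈ descendants b D n X ↔ ∃ x ∈ X, ∃ e ∈ digitSums b D n, b ^ n * x + e = a := by
  simp [descendants, Finset.mem_add, Finset.mem_smul_finset]

lemma descendants_biUnion {κ : Type*} (n : ℕ) (s : Finset κ) (X : κ → Finset A) :
    descendants b D n (s.biUnion X) = s.biUnion fun k => descendants b D n (X k) := by
  ext a
  simp only [mem_descendants, Finset.mem_biUnion]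
  tauto

lemma card_descendants_singleton_add (n : ℕ) (t : A) (X : Finset A) :
    #(descendants b D n ({t} + X)) = #(descendants b D n X) := by
  rw [descendants, smul_add, Finset.smul_finset_singleton, add_assoc, Finset.card_singleton_add,
    descendants]

lemma norm_map_digitSums_sub_le {𝕜 : Type*} [NormedField 𝕜] (v : A →+* 𝕜) {w : ℝ}
    (hD : ∀ d ∈ D, ∀ d' ∈ D, ‖v (d - d')‖ ≤ w * (‖v b‖ - 1)) {n : ℕ} {e e' : A}
    (he : e ∈ digitSums b D n) (he' : e' ∈ digitSums b D n) :
    ‖v (e - e')‖ ≤ w * (‖v b‖ ^ n - 1) := by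
  induction n generalizing e e' with
  | zero => simp_all [digitSums_zero]
  | succ n ih =>
    simp only [digitSums_succ, Finset.mem_add, Finset.mem_smul_finset] at he he'
    obtain ⟨_, ⟨q, hq, rfl⟩, d, hd, rfl⟩ := he
    obtain ⟨_, ⟨q', hq', rfl⟩, d', hd', rfl⟩ := he'
    calc ‖v (b • q + d - (b • q' + d'))‖ = ‖v b * v (q - q') + v (d - d')‖ := by
          simp only [smul_eq_mul, map_sub, map_add, map_mul]
          congr 1
          ring
      _ ≤ ‖v b‖ * ‖v (q - q')‖ + ‖v (d - d')‖ := by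
          rw [← norm_mul]; exact norm_add_le _ _
      _ ≤ ‖v b‖ * (w * (‖v b‖ ^ n - 1)) + w * (‖v b‖ - 1) := by
          gcongr
          exacts [ih hq hq', hD d hd d' hd']
      _ = w * (‖v b‖ ^ (n + 1) - 1) := by ring

lemma disjoint_descendants {𝕜 : Type*} [NormedField 𝕜] (v : A →+* 𝕜) {w : ℝ} (hw : 0 < w)
    (hD : ∀ d ∈ D, ∀ d' ∈ D, ‖v (d - d')‖ ≤ w * (‖v b‖ - 1)) {X Y : Finset A}
    (hXY : ∀ x ∈ X, ∀ y ∈ Y, w ≤ ‖v (x - y)‖) (n : ℕ) :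
    Disjoint (descendants b D n X) (descendants b D n Y) := by
  simp only [Finset.disjoint_left, mem_descendants]
  rintro _ ⟨x, hx, e, he, rfl⟩ ⟨y, hy, e', he', h⟩
  have hdiff : b ^ n * (x - y) = e' - e := by linear_combination -h
  have hle : ‖v b‖ ^ n * ‖v (x - y)‖ ≤ w * (‖v b‖ ^ n - 1) := by
    rw [← norm_pow, ← norm_mul, ← map_pow, ← map_mul, hdiff, map_pow, norm_pow]
    exact norm_map_digitSums_sub_le v hD he' he
  have := mul_le_mul_of_nonneg_left (hXY x hx y hy) (by positivity : 0 ≤ ‖v b‖ ^ n)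
  linarith

/-- Garsia's separation argument: the digit sums have bounded conjugates under `w`, so those with
nearby values under `v` differ from each other by elements of a fixed finite set. -/
theorem exists_card_digitSums_dist_le {𝕜 𝕜' : Type*} [NormedField 𝕜] [NormedField 𝕜']
    {v : A →+* 𝕜} {w : A →+* 𝕜'} (hb : ‖w b‖ < 1)
    (hfin : ∀ r : ℝ, {a | ‖v a‖ ≤ r ∧ ‖w a‖ ≤ r}.Finite) (r : ℝ) :
    ∃ M : ℕ, ∀ n y, #{p ∈ digitSums b D n | dist (v p) y ≤ r} ≤ M := by
  obtain ⟨B, hB⟩ : ∃ B, ∀ d ∈ D, ∀ d' ∈ D, ‖w (d - d')‖ ≤ B * (‖w b‖ - 1) := by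
    obtain ⟨B, hB⟩ := ((D - D).image fun a => ‖w a‖).exists_le
    refine ⟨B / (‖w b‖ - 1), fun d hd d' hd' => ?_⟩
    rw [div_mul_cancel₀ _ (by linarith)]
    exact hB _ (Finset.mem_image_of_mem _ (Finset.sub_mem_sub hd hd'))
  have hconj {n : ℕ} {p q : A} (hp : p ∈ digitSums b D n) (hq : q ∈ digitSums b D n) :
      ‖w (p - q)‖ ≤ |B| := by
    have hpow : ‖w b‖ ^ n ≤ 1 := pow_le_one₀ (norm_nonneg _) hb.le
    refine (norm_map_digitSums_sub_le w hB hp hq).trans ?_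
    nlinarith [neg_abs_le B, abs_nonneg B, pow_nonneg (norm_nonneg (w b)) n]
  set S := (hfin (max (2 * r) |B|)).toFinset
  refine ⟨#S, fun n y => ?_⟩
  rcases ({p ∈ digitSums b D n | dist (v p) y ≤ r}).eq_empty_or_nonempty with h | ⟨q, hq⟩
  · simp [h]
  rw [Finset.mem_filter] at hq
  refine Finset.card_le_card_of_injOn (· - q) (fun p hp => ?_) sub_left_injective.injOn
  rw [Finset.mem_coe, Finset.mem_filter] at hp
  rw [Finset.mem_coe, Finite.mem_toFinset]
  refine ⟨le_max_of_le_left ?_, le_max_of_le_right (hconj hp.1 hq.1)⟩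
  rw [map_sub, ← dist_eq_norm, two_mul]
  exact (dist_triangle_right _ _ y).trans (add_le_add hp.2 hq.2)

variable {ι : Type*} [Fintype ι]

/-- Finitely many patterns `cluster i` which reproduce under expansion: `b • cluster i + D` is the
union of the translates of `cluster j` by the elements of `offsets i j`, and the descendants of
different translates never meet. -/
structure IsClusterSystem (b : A) (D : Finset A) (cluster : ι → Finset A)
    (offsets : ι → ι → Finset A) : Prop where
  smul_add_eq (i : ι) : b • cluster i + D =
    (Finset.univ.sigma (offsets i)).biUnion fun q => {q.2} + cluster q.1
  pairwiseDisjoint (i : ι) (n : ℕ) :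
    (SetLike.coe (Finset.univ.sigma (offsets i))).PairwiseDisjoint
      fun q => descendants b D n ({q.2} + cluster q.1)

namespace IsClusterSystem

variable {cluster : ι → Finset A} {offsets : ι → ι → Finset A}

lemma card_descendants_succ (h : IsClusterSystem b D cluster offsets) (n : ℕ) (i : ι) :
    #(descendants b D (n + 1) (cluster i)) =
      ∑ j, #(offsets i j) * #(descendants b D n (cluster j)) := by
  rw [descendants_succ, h.smul_add_eq, descendants_biUnion, Finset.card_biUnion
    (h.pairwiseDisjoint i n), Finset.sum_sigma]
  simp [card_descendants_singleton_add]

theorem exists_card_descendants_bounds (h : IsClusterSystem b D cluster offsets)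
    (hne : ∀ i, (cluster i).Nonempty) {x : ℝ} {w : ι → ℝ} (hw : ∀ i, 0 < w i)
    (heig : ∀ i, ∑ j, #(offsets i j) * w j = x * w i) (i : ι) :
    ∃ c C, 0 < c ∧ ∀ n, c * x ^ n ≤ #(descendants b D n (cluster i)) ∧
      #(descendants b D n (cluster i)) ≤ C * x ^ n := by
  have hsum : 0 < ∑ j, w j := Finset.sum_pos (fun j _ => hw j) ⟨i, Finset.mem_univ i⟩
  set C := ∑ j, #(cluster j) / w j
  have hbounds (n : ℕ) (j : ι) : x ^ n * w j / ∑ k, w k ≤ #(descendants b D n (cluster j)) ∧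
      #(descendants b D n (cluster j)) ≤ C * (x ^ n * w j) := by
    induction n generalizing j with
    | zero =>
      rw [descendants_zero, pow_zero, one_mul, div_le_iff₀ hsum]
      constructor
      · have hle : w j ≤ ∑ k, w k :=
          Finset.single_le_sum (fun k _ => (hw k).le) (Finset.mem_univ j)
        have : (1 : ℝ) ≤ #(cluster j) := by exact_mod_cast (hne j).card_pos
        nlinarith
      · rw [← div_le_iff₀ (hw j)]
        exact Finset.single_le_sum (f := fun k => #(cluster k) / w k)
          (fun k _ => div_nonneg (by positivity) (hw k).le) (Finset.mem_univ j)
    | succ n ih =>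
      have hx : x ^ (n + 1) * w j = ∑ k, #(offsets j k) * (x ^ n * w k) := by
        rw [pow_succ, mul_assoc, ← heig, Finset.mul_sum]
        exact Finset.sum_congr rfl fun k _ => by ring
      rw [h.card_descendants_succ, hx, Finset.sum_div, Finset.mul_sum]
      push_cast
      constructor <;> refine Finset.sum_le_sum fun k _ => ?_
      · rw [mul_div_assoc]
        exact mul_le_mul_of_nonneg_left (ih k).1 (by positivity)
      · rw [mul_left_comm]
        exact mul_le_mul_of_nonneg_left (ih k).2 (by positivity)
  refine ⟨w i / ∑ k, w k, C * w i, div_pos (hw i) hsum, fun n => ?_⟩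
  convert hbounds n i using 2 <;> ring

end IsClusterSystem

end DigitSystem

section SelfAffine

variable {A 𝕜 : Type*} [CommRing A] [DecidableEq A] [NormedField 𝕜] {b : A} {D : Finset A}
  {v : A →+* 𝕜} {T : Set 𝕜}

lemma pow_smul_eq_image_digitSums_add (hself : v b • T = v '' D + T) (n : ℕ) :
    v b ^ n • T = v '' digitSums b D n + T := by
  induction n with
  | zero => simp [digitSums_zero]
  | succ n ih =>
    rw [pow_succ', mul_smul, ih, smul_add, hself, digitSums_succ, Finset.coe_add, image_add,
      Finset.coe_smul_finset, image_smul_distrib, add_assoc]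

lemma inv_pow_mul_mem (hb : v b ≠ 0) (hself : v b • T = v '' D + T) {n : ℕ} {p : A} {t : 𝕜}
    (hp : p ∈ digitSums b D n) (ht : t ∈ T) : (v b ^ n)⁻¹ * (v p + t) ∈ T := by
  rw [← smul_eq_mul, ← mem_smul_set_iff_inv_smul_mem₀ (pow_ne_zero n hb),
    pow_smul_eq_image_digitSums_add hself]
  exact add_mem_add (mem_image_of_mem v hp) ht

lemma exists_mem_digitSums_dist_le (hb : v b ≠ 0) (hself : v b • T = v '' D + T)
    (hT : Bornology.IsBounded T) {z t : 𝕜} (hz : z ∈ T) (ht : t ∈ T) (n : ℕ) :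
    ∃ p ∈ digitSums b D n, dist z ((v b ^ n)⁻¹ * (v p + t)) ≤ diam T * (‖v b‖ ^ n)⁻¹ := by
  have hmem : v b ^ n • z ∈ v '' digitSums b D n + T :=
    pow_smul_eq_image_digitSums_add hself n ▸ smul_mem_smul_set hz
  obtain ⟨_, ⟨p, hp, rfl⟩, u, hu, h⟩ := hmem
  refine ⟨p, hp, ?_⟩
  have hz_eq : z = (v b ^ n)⁻¹ * (v p + u) := by
    rw [eq_inv_mul_iff_mul_eq₀ (pow_ne_zero n hb)]
    exact h.symm
  calc dist z ((v b ^ n)⁻¹ * (v p + t)) = (‖v b‖ ^ n)⁻¹ * dist u t := by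
        rw [hz_eq, dist_eq_norm, dist_eq_norm, ← mul_sub, norm_mul, norm_inv, norm_pow,
          add_sub_add_left_eq_sub]
    _ ≤ diam T * (‖v b‖ ^ n)⁻¹ := by
        rw [mul_comm]
        gcongr
        exact dist_le_diam_of_mem hT hu ht

lemma card_filter_dist_le (hb : v b ≠ 0) (hself : v b • T = v '' D + T)
    (hT : Bornology.IsBounded T) {t : 𝕜} (ht : t ∈ T) {M : ℕ}
    (hM : ∀ n y, #{q ∈ digitSums b D n | dist (v q) y ≤ 1 + diam T} ≤ M) (k m : ℕ) (y : 𝕜) :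
    #{p ∈ digitSums b D (k + m) | dist ((v b ^ (k + m))⁻¹ * (v p + t)) y ≤ (‖v b‖ ^ k)⁻¹} ≤
      M * #(digitSums b D m) := by
  have hbk : v b ^ k ≠ 0 := pow_ne_zero k hb
  have hbm : v b ^ m ≠ 0 := pow_ne_zero m hb
  set Q := {q ∈ digitSums b D k | dist (v q) (v b ^ k * y - t) ≤ 1 + diam T}
  suffices hsub : {p ∈ digitSums b D (k + m) |
      dist ((v b ^ (k + m))⁻¹ * (v p + t)) y ≤ (‖v b‖ ^ k)⁻¹} ⊆ b ^ m • Q + digitSums b D m from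
    (Finset.card_le_card hsub).trans <| Finset.card_add_le.trans <|
      Nat.mul_le_mul_right _ (Finset.card_image_le.trans (hM k _))
  intro p hp
  rw [Finset.mem_filter, digitSums_add, Finset.mem_add] at hp
  obtain ⟨⟨_, hbq, e, he, rfl⟩, hdist⟩ := hp
  obtain ⟨q, hq, rfl⟩ := Finset.mem_smul_finset.1 hbq
  refine Finset.add_mem_add (Finset.smul_mem_smul_finset (Finset.mem_filter.2 ⟨hq, ?_⟩)) he
  set u := (v b ^ m)⁻¹ * (v e + t)
  have hu : dist t u ≤ diam T := dist_le_diam_of_mem hT ht (inv_pow_mul_mem hb hself he ht)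
  have hpoint : (v b ^ (k + m))⁻¹ * (v (b ^ m • q + e) + t) = (v b ^ k)⁻¹ * (v q + u) := by
    simp only [u, smul_eq_mul, map_add, map_mul, map_pow, pow_add]
    field_simp
    ring
  have hle : ‖v q + u - v b ^ k * y‖ ≤ 1 := by
    rw [hpoint, dist_eq_norm, inv_mul_eq_div, div_sub' hbk, norm_div, norm_pow,
      div_eq_mul_inv] at hdist
    exact le_of_mul_le_mul_right (hdist.trans_eq (one_mul _).symm) (by positivity)
  calc dist (v q) (v b ^ k * y - t) = ‖(v q + u - v b ^ k * y) + (t - u)‖ := by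
        rw [dist_eq_norm]
        congr 1
        ring
    _ ≤ 1 + diam T := (norm_add_le _ _).trans (add_le_add hle (dist_eq_norm t u ▸ hu))

theorem dimH_eq_logb_of_smul_eq {𝕜' : Type*} [NormedField 𝕜'] {w : A →+* 𝕜'} (hv : 1 < ‖v b‖)
    (hw : ‖w b‖ < 1) (hfin : ∀ r : ℝ, {a | ‖v a‖ ≤ r ∧ ‖w a‖ ≤ r}.Finite) (hT : IsCompact T)
    (hne : T.Nonempty) (hself : v b • T = v '' D + T) {x c C : ℝ} (hx : 1 < x) (hc : 0 < c)
    (hcard : ∀ n, c * x ^ n ≤ #(digitSums b D n) ∧ #(digitSums b D n) ≤ C * x ^ n) :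
    dimH T = ENNReal.ofReal (Real.logb ‖v b‖ x) := by
  have hb : v b ≠ 0 := norm_pos_iff.1 (by linarith)
  have hbdd := hT.isBounded
  obtain ⟨t, ht⟩ := hne
  obtain ⟨M, hM⟩ := exists_card_digitSums_dist_le (D := D) hw hfin (1 + diam T)
  have hs : 0 < Real.logb ‖v b‖ x := Real.logb_pos hv hx
  have hρs : ‖v b‖ ^ Real.logb ‖v b‖ x = x := Real.rpow_logb (by linarith) hv.ne' (by linarith)
  have hC : 0 < C := hc.trans_le (by simpa using (hcard 0).1.trans (hcard 0).2)
  set pt : ℕ → A → 𝕜 := fun n p => (v b ^ n)⁻¹ * (v p + t)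
  refine le_antisymm ?_ ?_
  · refine dimH_le_of_card_le (pt := pt) (C := C) (R := diam T) hv hs.le diam_nonneg
      (fun n => hρs.symm ▸ (hcard n).2) fun n z hz => ?_
    obtain ⟨p, hp, hdist⟩ := exists_mem_digitSums_dist_le hb hself hbdd hz ht n
    exact mem_iUnion₂.2 ⟨p, hp, hdist⟩
  · refine le_dimH_of_card_near_le (pt := pt) (C := (M + 1) * C) hT hv hs hc (by positivity)
      (fun n => hρs.symm ▸ (hcard n).1) (fun n p hp => inv_pow_mul_mem hb hself hp ht)
      fun k m y => ?_
    rw [hρs]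
    calc (#{p ∈ digitSums b D (k + m) | dist (pt (k + m) p) y ≤ (‖v b‖ ^ k)⁻¹} : ℝ)
        ≤ M * #(digitSums b D m) := by
          exact_mod_cast card_filter_dist_le hb hself hbdd ht hM k m y
      _ ≤ (M + 1) * (C * x ^ m) := by
          gcongr
          exacts [by linarith, (hcard m).2]
      _ = (M + 1) * C * x ^ m := by ring

end SelfAffine

section Dimension

lemma dimH_smul {𝕜 E : Type*} [NontriviallyNormedField 𝕜] [NormedAddCommGroup E]
    [NormedSpace 𝕜 E] {c : 𝕜} (hc : c ≠ 0) (S : Set E) : dimH (c • S) = dimH S :=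
  (ContinuousLinearEquiv.smulLeft (Units.mk0 c hc) : E ≃L[𝕜] E).dimH_image S

lemma dimH_finite_add {E : Type*} [NormedAddCommGroup E] {F : Set E} (hF : F.Finite)
    (hne : F.Nonempty) (S : Set E) : dimH (F + S) = dimH S := by
  rw [← iUnion_add_left_image, dimH_bUnion hF.countable]
  simp only [(isometry_add_left _).dimH_image]
  exact biSup_const hne

end Dimension

section CantorDifference

lemma smul_set_sub {M E : Type*} [AddGroup E] [DistribSMul M E] (c : M) (S T : Set E) :
    c • (S - T) = c • S - c • T :=
  image_sub (DistribSMul.toAddMonoidHom E c)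

/-- The value `∑ εₖ aᵏ` of a digit sequence in base `a⁻¹`; the points of `middleCantor a` are
`1 - a` times these values. -/
noncomputable def digitSeries (a : ℝ) (ε : ℕ → Bool) : ℝ :=
  ∑' k, if ε k then a ^ k else 0

variable {a b l : ℝ}

lemma norm_ite_pow_le (a : ℝ) (k : ℕ) (d : Bool) : ‖if d then a ^ k else 0‖ ≤ ‖a‖ ^ k := by
  cases d <;> simp

lemma digitSeries_succ (ha : ‖a‖ < 1) (ε : ℕ → Bool) :
    digitSeries a ε = (if ε 0 then 1 else 0) + a * digitSeries a fun k => ε (k + 1) := by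
  have hsum : Summable fun k => if ε k then a ^ k else 0 :=
    (summable_geometric_of_lt_one (norm_nonneg a) ha).of_norm_bounded
      fun k => norm_ite_pow_le a k (ε k)
  rw [digitSeries, hsum.tsum_eq_zero_add, digitSeries, ← tsum_mul_left]
  simp [pow_succ']

lemma continuous_digitSeries (ha : ‖a‖ < 1) : Continuous (digitSeries a) := by
  refine continuous_tsum (fun k => ?_) (summable_geometric_of_lt_one (norm_nonneg a) ha)
    fun k ε => norm_ite_pow_le a k (ε k)
  exact (continuous_of_discreteTopology (f := fun d : Bool => if d then a ^ k else 0)).comp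
    (continuous_apply k)

lemma range_digitSeries (ha : ‖a‖ < 1) :
    range (digitSeries a) = {0, 1} + a • range (digitSeries a) := by
  ext x
  constructor
  · rintro ⟨ε, rfl⟩
    rw [digitSeries_succ ha]
    exact add_mem_add (by cases ε 0 <;> simp) (smul_mem_smul_set (mem_range_self _))
  · rintro ⟨d, hd, _, ⟨_, ⟨ε, rfl⟩, rfl⟩, rfl⟩
    rcases hd with rfl | rfl
    · exact ⟨fun k => k.casesOn false ε, digitSeries_succ ha _⟩
    · exact ⟨fun k => k.casesOn true ε, digitSeries_succ ha _⟩

lemma smul_range_digitSeries (ha : ‖a‖ < 1) (c : ℝ) :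
    c • range (digitSeries a) = c • {0, 1} + (c * a) • range (digitSeries a) := by
  rw [mul_smul, ← smul_add, ← range_digitSeries ha]

lemma middleCantor_eq_smul_range (a : ℝ) : middleCantor a = (1 - a) • range (digitSeries a) := by
  ext x
  simp only [mem_smul_set, exists_range_iff, smul_eq_mul, eq_comm (b := x)]
  rfl

lemma diffSet_eq_smul_sub (h : l * (1 - b) = 1 - a) :
    diffSet a b l = (1 - a) • (range (digitSeries a) - range (digitSeries b)) := by
  have himage : diffSet a b l = middleCantor a - l • middleCantor b := by
    ext z
    simp only [Set.mem_sub, mem_smul_set, exists_exists_and_eq_and, smul_eq_mul, eq_comm (b := z)]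
    rfl
  rw [himage, middleCantor_eq_smul_range, middleCantor_eq_smul_range, smul_smul, h, smul_set_sub]

/-- The first digits of the two expansions only contribute the finite set `{0, 1} - {0, 1}`. -/
lemma dimH_diffSet_eq_dimH_smul_sub (ha : ‖a‖ < 1) (hb : ‖b‖ < 1) (h : l * (1 - b) = 1 - a) :
    dimH (diffSet a b l) =
      dimH (a • range (digitSeries a) - b • range (digitSeries b)) := by
  have ha' : 1 - a ≠ 0 := (sub_pos.2 ((Real.le_norm_self a).trans_lt ha)).ne'
  rw [diffSet_eq_smul_sub h, dimH_smul ha', range_digitSeries ha, range_digitSeries hb,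
    add_sub_add_comm, ← range_digitSeries ha, ← range_digitSeries hb]
  exact dimH_finite_add ((toFinite _).sub (toFinite _))
    ((insert_nonempty _ _).sub (insert_nonempty _ _)) _

end CantorDifference

/-- The ring `ℤ[φ]` of golden integers, where `⟨a, b⟩` stands for `a + b φ`. -/
abbrev GoldenInt : Type := QuadraticAlgebra ℤ 1 1

namespace GoldenInt

local notation "ω" => (QuadraticAlgebra.omega : GoldenInt)

/-- The evaluation `a + b φ ↦ a + b u` at a root `u` of `X ^ 2 = X + 1`. -/
noncomputable def eval (u : ℝ) (hu : u ^ 2 = u + 1) : GoldenInt →+* ℝ :=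
  (QuadraticAlgebra.lift ⟨u, by linear_combination hu⟩ : GoldenInt →ₐ[ℤ] ℝ).toRingHom

lemma eval_apply {u : ℝ} (hu : u ^ 2 = u + 1) (z : GoldenInt) :
    eval u hu z = z.re + z.im * u := by
  simp [eval]

lemma eval_omega {u : ℝ} (hu : u ^ 2 = u + 1) : eval u hu ω = u := by
  simp [eval_apply]

/-- The digit set of `goldenDifference` in base `φ ^ 6`: the contribution to
`φ ^ 6 • goldenDifference` of the terms with positive exponent. -/
def digits : Finset GoldenInt :=
  ω ^ 4 • {0, 1} + ω • {0, 1} - (ω ^ 5 • {0, 1} + ω ^ 3 • {0, 1} + ω • {0, 1})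

/-- The three patterns, up to translation, into which the descendants of `{0}` in base `φ ^ 6`
split. -/
def cluster : Fin 3 → Finset GoldenInt :=
  ![{0}, {0, 1}, {0, 1, ω, 1 + ω}]

/-- The elements by which `cluster j` has to be translated in order to make up
`φ ^ 6 • cluster i + digits`. -/
def offsets : Fin 3 → Fin 3 → Finset GoldenInt :=
  ![![{⟨-4, -8⟩, ⟨-4, -7⟩, ⟨-1, -2⟩, ⟨2, 3⟩, ⟨2, 4⟩},
      {⟨-4, -6⟩, ⟨-2, -3⟩, ⟨-1, -1⟩, ⟨1, 2⟩},
      {⟨-3, -5⟩, ⟨0, 0⟩}],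
    ![{⟨-4, -8⟩, ⟨-4, -7⟩, ⟨-1, -2⟩, ⟨4, 6⟩, ⟨7, 11⟩, ⟨7, 12⟩},
      {⟨-4, -6⟩, ⟨-2, -3⟩, ⟨-1, -1⟩, ⟨1, 2⟩, ⟨3, 5⟩, ⟨4, 7⟩, ⟨6, 10⟩},
      {⟨-3, -5⟩, ⟨0, 0⟩, ⟨2, 3⟩, ⟨5, 8⟩}],
    ![{⟨-4, -8⟩, ⟨-4, -7⟩, ⟨-1, -2⟩, ⟨4, 6⟩, ⟨7, 11⟩, ⟨12, 19⟩, ⟨15, 24⟩, ⟨15, 25⟩},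
      {⟨-4, -6⟩, ⟨-2, -3⟩, ⟨-1, -1⟩, ⟨1, 2⟩, ⟨3, 5⟩, ⟨4, 7⟩, ⟨6, 10⟩, ⟨7, 12⟩, ⟨9, 15⟩,
        ⟨11, 18⟩, ⟨12, 20⟩, ⟨14, 23⟩},
      {⟨-3, -5⟩, ⟨0, 0⟩, ⟨2, 3⟩, ⟨5, 8⟩, ⟨8, 13⟩, ⟨10, 16⟩, ⟨13, 21⟩}]]

lemma smul_cluster_add_digits (i : Fin 3) : ω ^ 6 • cluster i + digits =
    (Finset.univ.sigma (offsets i)).biUnion fun q => {q.2} + cluster q.1 := by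
  decide +kernel +revert

/-- A decidable sufficient condition for `3 / 2 ≤ a + b φ`, namely `3 / 2 ≤ a + b u` at both ends
of `8 / 5 < φ < 13 / 8`. -/
def IsLarge (z : GoldenInt) : Prop :=
  15 ≤ 10 * z.re + 16 * z.im ∧ 12 ≤ 8 * z.re + 13 * z.im

instance : DecidablePred IsLarge :=
  fun z => inferInstanceAs (Decidable (15 ≤ 10 * z.re + 16 * z.im ∧ 12 ≤ 8 * z.re + 13 * z.im))

lemma isLarge_sub_or_isLarge_sub : ∀ i, ∀ q ∈ Finset.univ.sigma (offsets i),
    ∀ q' ∈ Finset.univ.sigma (offsets i), q ≠ q' →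
      ∀ x ∈ {q.2} + cluster q.1, ∀ y ∈ {q'.2} + cluster q'.1,
        IsLarge (x - y) ∨ IsLarge (y - x) := by
  decide +kernel

lemma abs_re_im_sub_digits_le :
    ∀ d ∈ digits, ∀ d' ∈ digits, |(d - d').re| ≤ 6 ∧ |(d - d').im| ≤ 12 := by
  decide +kernel

lemma eight_fifths_lt_goldenRatio : 8 / 5 < φ := by
  nlinarith [Real.goldenRatio_sq, Real.goldenRatio_pos]

lemma goldenRatio_lt_thirteen_eighths : φ < 13 / 8 := by
  nlinarith [Real.goldenRatio_sq, Real.goldenRatio_pos]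

lemma goldenRatio_pow_six : φ ^ 6 = 8 * φ + 5 := by
  linear_combination (φ ^ 4 + φ ^ 3 + 2 * φ ^ 2 + 3 * φ + 5) * Real.goldenRatio_sq

/-- The evaluation of golden integers in `ℝ`. -/
noncomputable abbrev toReal : GoldenInt →+* ℝ := eval φ Real.goldenRatio_sq

/-- The evaluation of the Galois conjugates of golden integers in `ℝ`. -/
noncomputable abbrev conjToReal : GoldenInt →+* ℝ := eval ψ Real.goldenConj_sq

lemma image_toReal_digits : toReal '' digits = φ ^ 4 • {0, 1} + φ • {0, 1} -
    (φ ^ 5 • {0, 1} + φ ^ 3 • {0, 1} + φ • {0, 1}) := by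
  simp only [digits, Finset.coe_sub, Finset.coe_add, Finset.coe_smul_finset, Finset.coe_pair,
    image_sub, image_add, image_smul_distrib, image_pair, map_pow, map_zero, map_one, eval_omega]

lemma norm_toReal_base : ‖toReal (ω ^ 6)‖ = φ ^ 6 := by
  rw [map_pow, eval_omega, norm_pow, Real.norm_of_nonneg Real.goldenRatio_pos.le]

lemma norm_conjToReal_base_lt_one : ‖conjToReal (ω ^ 6)‖ < 1 := by
  rw [map_pow, eval_omega, norm_pow]
  refine pow_lt_one₀ (norm_nonneg _) ?_ (by norm_num)
  exact abs_lt.2 ⟨Real.neg_one_lt_goldenConj, Real.goldenConj_neg.trans one_pos⟩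

lemma IsLarge.le_toReal {z : GoldenInt} (hz : IsLarge z) : 3 / 2 ≤ toReal z := by
  have h₁ : (15 : ℝ) ≤ 10 * z.re + 16 * z.im := by exact_mod_cast hz.1
  have h₂ : (12 : ℝ) ≤ 8 * z.re + 13 * z.im := by exact_mod_cast hz.2
  rw [eval_apply]
  nlinarith [mul_nonneg (sub_nonneg.2 h₁) (sub_pos.2 goldenRatio_lt_thirteen_eighths).le,
    mul_nonneg (sub_nonneg.2 h₂) (sub_pos.2 eight_fifths_lt_goldenRatio).le]

lemma norm_toReal_sub_digits_le : ∀ d ∈ digits, ∀ d' ∈ digits,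
    ‖toReal (d - d')‖ ≤ 3 / 2 * (‖toReal (ω ^ 6)‖ - 1) := by
  intro d hd d' hd'
  obtain ⟨hre, him⟩ := abs_re_im_sub_digits_le d hd d' hd'
  have hre' : |((d - d').re : ℝ)| ≤ 6 := by exact_mod_cast hre
  have him' : |((d - d').im : ℝ)| ≤ 12 := by exact_mod_cast him
  calc ‖toReal (d - d')‖ ≤ |((d - d').re : ℝ)| + |((d - d').im : ℝ)| * φ := by
        rw [eval_apply, ← abs_of_pos Real.goldenRatio_pos, ← abs_mul, abs_of_pos
          Real.goldenRatio_pos]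
        exact norm_add_le _ _
    _ ≤ 6 + 12 * φ := by gcongr
    _ = 3 / 2 * (‖toReal (ω ^ 6)‖ - 1) := by
        rw [norm_toReal_base, goldenRatio_pow_six]
        ring

theorem isClusterSystem : IsClusterSystem (ω ^ 6) digits cluster offsets where
  smul_add_eq := smul_cluster_add_digits
  pairwiseDisjoint i n q hq q' hq' hne := by
    refine disjoint_descendants toReal (by norm_num) norm_toReal_sub_digits_le
      (fun x hx y hy => ?_) n
    rcases isLarge_sub_or_isLarge_sub i q hq q' hq' hne x hx y hy with h | h
    · exact h.le_toReal.trans (le_abs_self _)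
    · rw [← neg_sub, map_neg, norm_neg]
      exact h.le_toReal.trans (le_abs_self _)

lemma finite_norm_toReal_le_and_norm_conjToReal_le (r : ℝ) :
    {z : GoldenInt | ‖toReal z‖ ≤ r ∧ ‖conjToReal z‖ ≤ r}.Finite := by
  refine (((finite_Icc (-⌈3 * r⌉) ⌈3 * r⌉).prod (finite_Icc (-⌈3 * r⌉) ⌈3 * r⌉)).preimage
    (QuadraticAlgebra.equivProd (R := ℤ) 1 1).injective.injOn).subset ?_
  rintro z ⟨hv, hw⟩
  simp only [eval_apply, Real.norm_eq_abs, abs_le] at hv hw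
  have hconj : ψ = 1 - φ := by linarith [Real.goldenRatio_add_goldenConj]
  rw [hconj] at hw
  have := eight_fifths_lt_goldenRatio
  have := Real.goldenRatio_lt_two
  have him : |(z.im : ℝ)| ≤ r := by
    rw [abs_le]
    constructor <;> nlinarith
  have hre : |(z.re : ℝ)| ≤ 3 * r := by
    rw [abs_le] at him ⊢
    constructor <;> nlinarith
  have him' : |(z.im : ℝ)| ≤ 3 * r := him.trans (by linarith [abs_nonneg (z.im : ℝ)])
  have mem_Icc_of_abs_le {m : ℤ} (hm : |(m : ℝ)| ≤ 3 * r) : m ∈ Icc (-⌈3 * r⌉) ⌈3 * r⌉ := by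
    rw [mem_Icc, ← abs_le]
    exact_mod_cast hm.trans (Int.le_ceil _)
  exact ⟨mem_Icc_of_abs_le hre, mem_Icc_of_abs_le him'⟩

lemma card_offsets (i j : Fin 3) :
    #(offsets i j) = !![5, 4, 2; 6, 7, 4; 8, 12, 7] i j := by
  fin_cases i <;> fin_cases j <;> rfl

theorem exists_card_digitSums_bounds {x : ℝ} (hx : 17 < x)
    (hroot : x ^ 3 - 19 * x ^ 2 + 31 * x + 3 = 0) :
    ∃ c C, 0 < c ∧ ∀ n, c * x ^ n ≤ #(digitSums (ω ^ 6) digits n) ∧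
      #(digitSums (ω ^ 6) digits n) ≤ C * x ^ n := by
  simp only [← descendants_zero_singleton]
  have hpos₂ : 0 < x ^ 2 - 12 * x + 11 := by nlinarith
  have heig₀ : 5 * (2 + 2 * x) + 4 * (4 * x - 8) + 2 * (x ^ 2 - 12 * x + 11) = x * (2 + 2 * x) := by
    ring
  have heig₁ : 6 * (2 + 2 * x) + 7 * (4 * x - 8) + 4 * (x ^ 2 - 12 * x + 11) = x * (4 * x - 8) := by
    ring
  have heig₂ : 8 * (2 + 2 * x) + 12 * (4 * x - 8) + 7 * (x ^ 2 - 12 * x + 11) =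
      x * (x ^ 2 - 12 * x + 11) := by
    linear_combination -hroot
  refine isClusterSystem.exists_card_descendants_bounds
    (w := ![2 + 2 * x, 4 * x - 8, x ^ 2 - 12 * x + 11]) (by decide) (fun i => ?_) (fun i => ?_) 0
  · fin_cases i
    exacts [show 0 < 2 + 2 * x by linarith, show 0 < 4 * x - 8 by linarith, hpos₂]
  · simp only [card_offsets, Fin.sum_univ_three]
    fin_cases i
    exacts [mod_cast heig₀, mod_cast heig₁, mod_cast heig₂]

end GoldenInt

section GoldenDifference

/-- The sums `∑ εₖ φ ^ (1 - 3 * k) - ∑ δₖ φ ^ (1 - 2 * k)` over `k ≥ 1` with `εₖ, δₖ ∈ {0, 1}`,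
which make up a self-affine set of the same dimension as the difference set. The factor `φ` is
chosen so as to scale the pair in `GoldenInt.cluster` to `{0, 1}`. -/
noncomputable def goldenDifference : Set ℝ :=
  φ • (φ ^ (-3 : ℤ) • range (digitSeries (φ ^ (-3 : ℤ))) -
    φ ^ (-2 : ℤ) • range (digitSeries (φ ^ (-2 : ℤ))))

lemma norm_goldenRatio_zpow_lt_one {n : ℤ} (hn : n < 0) : ‖φ ^ n‖ < 1 := by
  rw [Real.norm_of_nonneg (zpow_nonneg Real.goldenRatio_pos.le n)]
  exact zpow_lt_one_of_neg₀ Real.one_lt_goldenRatio hn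

lemma smul_goldenDifference : GoldenInt.toReal (QuadraticAlgebra.omega ^ 6) • goldenDifference =
    GoldenInt.toReal '' GoldenInt.digits + goldenDifference := by
  have hα := smul_range_digitSeries (norm_goldenRatio_zpow_lt_one (n := -3) (by norm_num))
  have hβ := smul_range_digitSeries (norm_goldenRatio_zpow_lt_one (n := -2) (by norm_num))
  have hmul (m : ℕ) (n : ℤ) : φ ^ m * φ ^ n = φ ^ (m + n) := by
    rw [zpow_add₀ Real.goldenRatio_ne_zero, zpow_natCast]
  have hα₄ : φ ^ 4 * φ ^ (-3 : ℤ) = φ := by simpa using hmul 4 (-3)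
  have hβ₅ : φ ^ 5 * φ ^ (-2 : ℤ) = φ ^ 3 := by exact_mod_cast hmul 5 (-2)
  have hβ₃ : φ ^ 3 * φ ^ (-2 : ℤ) = φ := by simpa using hmul 3 (-2)
  rw [map_pow, GoldenInt.eval_omega, GoldenInt.image_toReal_digits, goldenDifference]
  set P := range (digitSeries (φ ^ (-3 : ℤ)))
  set Q := range (digitSeries (φ ^ (-2 : ℤ)))
  calc φ ^ 6 • φ • (φ ^ (-3 : ℤ) • P - φ ^ (-2 : ℤ) • Q) = φ ^ 4 • P - φ ^ 5 • Q := by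
        have hα₆ : φ ^ 6 * (φ * φ ^ (-3 : ℤ)) = φ ^ 4 := by
          rw [← mul_assoc, ← pow_succ]
          exact_mod_cast hmul 7 (-3)
        have hβ₆ : φ ^ 6 * (φ * φ ^ (-2 : ℤ)) = φ ^ 5 := by
          rw [← mul_assoc, ← pow_succ]
          exact_mod_cast hmul 7 (-2)
        simp only [smul_set_sub, smul_smul, hα₆, hβ₆]
    _ = φ ^ 4 • {0, 1} + φ • {0, 1} + φ • φ ^ (-3 : ℤ) • P -
          (φ ^ 5 • {0, 1} + φ ^ 3 • {0, 1} + φ • {0, 1} + φ • φ ^ (-2 : ℤ) • Q) := by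
        rw [hα (φ ^ 4), hα₄, hα φ, hβ (φ ^ 5), hβ₅, hβ (φ ^ 3), hβ₃, hβ φ]
        simp only [mul_smul, add_assoc]
    _ = φ ^ 4 • {0, 1} + φ • {0, 1} - (φ ^ 5 • {0, 1} + φ ^ 3 • {0, 1} + φ • {0, 1}) +
          φ • (φ ^ (-3 : ℤ) • P - φ ^ (-2 : ℤ) • Q) := by
        rw [smul_set_sub, sub_add_sub_comm]

lemma isCompact_goldenDifference : IsCompact goldenDifference := by
  have hrange {n : ℤ} (hn : n < 0) : IsCompact (range (digitSeries (φ ^ n))) :=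
    isCompact_range (continuous_digitSeries (norm_goldenRatio_zpow_lt_one hn))
  have hα := hrange (n := -3) (by norm_num)
  have hβ := hrange (n := -2) (by norm_num)
  rw [goldenDifference, sub_eq_add_neg]
  exact ((hα.smul _).add (hβ.smul _).neg).smul _

lemma goldenDifference_nonempty : goldenDifference.Nonempty :=
  (((range_nonempty _).smul_set).sub (range_nonempty _).smul_set).smul_set

lemma dimH_diffSet_goldenRatio :
    dimH (diffSet (φ ^ (-3 : ℤ)) (φ ^ (-2 : ℤ)) (2 / φ)) = dimH goldenDifference := by
  have hratio : 2 / φ * (1 - φ ^ (-2 : ℤ)) = 1 - φ ^ (-3 : ℤ) := by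
    have hφ := Real.goldenRatio_ne_zero
    have hsq := Real.goldenRatio_sq
    generalize φ = u at hφ hsq ⊢
    field_simp
    linear_combination (1 - u) * hsq
  rw [dimH_diffSet_eq_dimH_smul_sub (norm_goldenRatio_zpow_lt_one (by norm_num))
    (norm_goldenRatio_zpow_lt_one (by norm_num)) hratio, goldenDifference,
    dimH_smul Real.goldenRatio_ne_zero]

end GoldenDifference

lemma seventeen_lt_of_forall_root_le {x : ℝ}
    (hmax : ∀ y : ℝ, y ^ 3 - 19 * y ^ 2 + 31 * y + 3 = 0 → y ≤ x) : 17 < x := by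
  have hcont : ContinuousOn (fun y : ℝ => y ^ 3 - 19 * y ^ 2 + 31 * y + 3) (Icc 17 18) := by
    fun_prop
  obtain ⟨y, ⟨hy, -⟩, hroot⟩ := intermediate_value_Ioo (by norm_num) hcont
    (show (0 : ℝ) ∈ Ioo _ _ by norm_num)
  exact hy.trans_le (hmax y hroot)

theorem stmt19 (γ : ℝ) (hγ : γ = (1 + Real.sqrt 5) / 2)
    (x : ℝ) (hroot : x ^ 3 - 19 * x ^ 2 + 31 * x + 3 = 0)
    (hmax : ∀ y : ℝ, y ^ 3 - 19 * y ^ 2 + 31 * y + 3 = 0 → y ≤ x) :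
    dimH (diffSet (γ ^ (-3 : ℤ)) (γ ^ (-2 : ℤ)) (2 / γ)) =
      ENNReal.ofReal (Real.log x / (6 * Real.log γ)) := by
  obtain rfl : γ = φ := hγ
  have hx : 17 < x := seventeen_lt_of_forall_root_le hmax
  obtain ⟨c, C, hc, hcard⟩ := GoldenInt.exists_card_digitSums_bounds hx hroot
  have hlog : Real.log (φ ^ 6) = 6 * Real.log φ := by simp
  rw [dimH_diffSet_goldenRatio, ← hlog, Real.log_div_log, ← GoldenInt.norm_toReal_base]
  refine dimH_eq_logb_of_smul_eq ?_ GoldenInt.norm_conjToReal_base_lt_one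
    GoldenInt.finite_norm_toReal_le_and_norm_conjToReal_le isCompact_goldenDifference
    goldenDifference_nonempty smul_goldenDifference (by linarith) hc hcard
  rw [GoldenInt.norm_toReal_base]
  exact one_lt_pow₀ Real.one_lt_goldenRatio (by norm_num)
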